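/- Let G be the bipartite graph of a finite poset (V, ≺) (classes V⁻, V⁺; edge (v⁻,u⁺) iff v ≺ u). If M is a maximum matching in G of size m, then the maximum antichain in (V, ≺) has size exactly |V| − m. -/

import Mathlib

/-- A matching in the bipartite comparability graph of a poset: a set of pairs
(v,u) with v < u, injective in each coordinate. -/
def IsPosetMatching {V : Type*} [PartialOrder V] (M : Finset (V × V)) : Prop :=
  (∀ p ∈ M, p.1 < p.2) ∧
  (∀ v u u', (v, u) ∈ M → (v, u') ∈ M → u = u') ∧
  (∀ v v' u, (v, u) ∈ M → (v', u) ∈ M → v = v')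

/-- If the maximum matching in the comparability bipartite graph of a finite poset
has size m, then the maximum antichain has size exactly |V| - m. -/
theorem max_antichain_eq_card_sub_matching (V : Type*) [Fintype V] [PartialOrder V]
    (m : ℕ)
    (hm : IsGreatest {k : ℕ | ∃ M : Finset (V × V), IsPosetMatching M ∧ M.card = k} m) :
    IsGreatest {k : ℕ | ∃ A : Finset V,
        IsAntichain (· < ·) (A : Set V) ∧ A.card = k}
      (Fintype.card V - m) := by
  classical
  obtain ⟨⟨M, ⟨hlt, hR, hL⟩, hMc⟩, hmax⟩ := hm
  constructor
  · -- deficiency version of Hall's theorem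
    let N : Finset V → Finset V := fun S => Finset.univ.filter (fun u => ∃ v ∈ S, v < u)
    have key : ∃ S : Finset V, (N S).card + (Fintype.card V - m) ≤ S.card := by
      by_contra! hS
      have h0 := hS ∅
      have hd : 1 ≤ Fintype.card V - m := by
        simp [N] at h0; omega
      let t : V → Finset (V ⊕ Fin (Fintype.card V - m - 1)) := fun v =>
        (Finset.univ.filter (fun u => v < u)).disjSum Finset.univ
      have hall : ∀ S : Finset V, S.card ≤ (S.biUnion t).card := by
        intro S
        rcases S.eq_empty_or_nonempty with rfl | ⟨s, hs⟩
        · simp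
        have : (N S).disjSum Finset.univ ⊆ S.biUnion t := by
          intro x hx
          rcases x with u | i
          · simpa [N, t] using hx
          · simp only [Finset.mem_biUnion]
            exact ⟨s, hs, by simp [t]⟩
        have h1 := Finset.card_le_card this
        rw [Finset.card_disjSum, Finset.card_univ, Fintype.card_fin] at h1
        have := hS S
        omega
      obtain ⟨f, hf, hft⟩ := (Finset.all_card_le_biUnion_card_iff_exists_injective t).1 hall
      let M' : Finset (V × V) := Finset.univ.filter (fun p => f p.1 = Sum.inl p.2)
      have hM' : IsPosetMatching M' := by
        refine ⟨?_, ?_, ?_⟩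
        · rintro ⟨v, u⟩ hp
          have hp' : f v = Sum.inl u := by simpa [M'] using hp
          have := hft v
          rw [hp'] at this
          simpa [t] using this
        · intro v u u' h h'
          have h1 : f v = Sum.inl u := by simpa [M'] using h
          have h2 : f v = Sum.inl u' := by simpa [M'] using h'
          exact Sum.inl_injective (h1.symm.trans h2)
        · intro v v' u h h'
          have h1 : f v = Sum.inl u := by simpa [M'] using h
          have h2 : f v' = Sum.inl u := by simpa [M'] using h'
          exact hf (h1.trans h2.symm)
      have hle : M'.card ≤ m := hmax ⟨M', hM', rfl⟩
      have himg : Finset.univ.image f ⊆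
          (M'.image Prod.snd).disjSum (Finset.univ : Finset (Fin (Fintype.card V - m - 1))) := by
        intro x hx
        obtain ⟨v, -, rfl⟩ := Finset.mem_image.1 hx
        rcases h : f v with u | i
        · rw [Finset.inl_mem_disjSum, Finset.mem_image]
          exact ⟨(v, u), by simp [M', h], rfl⟩
        · simp
      have h1 := Finset.card_le_card himg
      rw [Finset.card_disjSum, Finset.card_image_of_injective _ hf, Finset.card_univ,
        Finset.card_univ, Fintype.card_fin] at h1
      have h2 : (M'.image Prod.snd).card ≤ M'.card := Finset.card_image_le
      omega
    obtain ⟨S, hS⟩ := key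
    have h1 : Fintype.card V - m ≤ (S \ N S).card := by
      have := Finset.le_card_sdiff (N S) S
      omega
    obtain ⟨A, hA, hAc⟩ := Finset.exists_subset_card_eq h1
    refine ⟨A, ?_, hAc⟩
    intro a ha b hb _ hab
    have ha' := Finset.mem_sdiff.1 (hA ha)
    have hb' := Finset.mem_sdiff.1 (hA hb)
    exact hb'.2 (by simpa [N] using ⟨a, ha'.1, hab⟩)
  · rintro k ⟨A, hA, rfl⟩
    let R : V → V → Prop := fun a b => (a, b) ∈ M
    let D : Finset V := M.image Prod.fst
    have hD : D.card = m := by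
      rw [← hMc]
      apply Finset.card_image_of_injOn
      rintro ⟨a, b⟩ h ⟨a', b'⟩ h' (rfl : a = a')
      rw [hR a b b' h h']
    have top : ∀ a : V, ∃ t, t ∉ D ∧ Relation.ReflTransGen R a t := by
      intro a
      induction a using WellFoundedGT.induction with
      | ind a ih =>
        by_cases ha : a ∈ D
        · obtain ⟨⟨a', b⟩, hab, rfl⟩ := Finset.mem_image.1 ha
          obtain ⟨t, ht, hbt⟩ := ih b (hlt _ hab)
          exact ⟨t, ht, Relation.ReflTransGen.head hab hbt⟩
        · exact ⟨a, ha, .refl⟩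
    have hle : ∀ a b, Relation.ReflTransGen R a b → a ≤ b := by
      intro a b h
      induction h with
      | refl => exact le_rfl
      | tail _ h ih => exact ih.trans (hlt _ h).le
    choose g hgD hg using top
    have hinj : Set.InjOn g A := by
      intro a ha b hb hab
      by_contra hne
      have h1 := Relation.reflTransGen_swap.2 (hg a)
      have h2 := Relation.reflTransGen_swap.2 (hg b)
      rw [← hab] at h2
      have U : Relator.RightUnique (Function.swap R) := fun x y z hy hz => hL y z x hy hz
      rcases Relation.ReflTransGen.total_of_right_unique U h1 h2 with h | h
      · have := hle _ _ (Relation.reflTransGen_swap.1 h)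
        exact hA hb ha (Ne.symm hne) (lt_of_le_of_ne this (Ne.symm hne))
      · have := hle _ _ (Relation.reflTransGen_swap.1 h)
        exact hA ha hb hne (lt_of_le_of_ne this hne)
    have := Finset.card_le_card_of_injOn (t := Dᶜ) g (fun a _ => by simpa using hgD a) hinj
    rwa [Finset.card_compl, hD] at this
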